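/- Let n ∈ ℕ with n ≥ 3, let p ∈ (0,2], let x ∈ ℝⁿ with |x| = 1 and let a ∈ ℝ. Then ∫_{S^{n-1}} |x - a z|^p dσ(z) = 1 + a² p (p+n-2) ∫₀¹ ∫₀ᵗ (r/t)^{n-1} ( ∫_{S^{n-1}} |x - a r z|^{p-2} dσ(z) ) dr dt, where the inner spherical integral of |x - a r z|^{p-2} is finite for every r. -/

import Mathlib

open MeasureTheory Metric

/-- The normalized rotation-invariant (Haar) probability measure `σ` on the unit
sphere `S^{n-1} ⊆ ℝⁿ`. -/
noncomputable def sphereHaar (n : ℕ) :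
    Measure (sphere (0 : EuclideanSpace ℝ (Fin n)) 1) :=
  ((volume : Measure (EuclideanSpace ℝ (Fin n))).toSphere Set.univ)⁻¹ •
    (volume : Measure (EuclideanSpace ℝ (Fin n))).toSphere

open Set Filter Topology
open scoped RealInnerProductSpace Pointwise Interval

section SphereHaar

variable {n : ℕ}

local notation "𝔼" => EuclideanSpace ℝ (Fin n)

local notation "𝕊" => sphere (0 : EuclideanSpace ℝ (Fin n)) 1

/-- The restriction of a linear isometry to the unit sphere, as a homeomorphism. -/
noncomputable def sphereHomeomorph {E : Type*} [NormedAddCommGroup E] [NormedSpace ℝ E]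
    (R : E ≃ₗᵢ[ℝ] E) : sphere (0 : E) 1 ≃ₜ sphere (0 : E) 1 :=
  R.toHomeomorph.subtype fun z => by simp

theorem measurePreserving_sphereHomeomorph (R : 𝔼 ≃ₗᵢ[ℝ] 𝔼) :
    MeasurePreserving (sphereHomeomorph R) (sphereHaar n) (sphereHaar n) := by
  refine ⟨(sphereHomeomorph R).measurable, ?_⟩
  unfold sphereHaar
  rw [Measure.map_smul]
  congr 1
  ext s hs
  rw [Measure.map_apply (sphereHomeomorph R).measurable hs, Measure.toSphere_apply' _ hs,
    Measure.toSphere_apply' _ ((sphereHomeomorph R).measurable hs),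
    ← R.measurePreserving.measure_preimage_equiv (f := R.toMeasurableEquiv)
      (Ioo (0 : ℝ) 1 • (Subtype.val '' s))]
  congr 2
  ext z
  simp only [Set.mem_smul, mem_preimage]
  constructor
  · rintro ⟨r, hr, _, ⟨y, hy, rfl⟩, rfl⟩
    exact ⟨r, hr, _, ⟨sphereHomeomorph R y, hy, rfl⟩, (map_smul R r (y : 𝔼)).symm⟩
  · rintro ⟨r, hr, _, ⟨y, hy, rfl⟩, h⟩
    refine ⟨r, hr, _, ⟨(sphereHomeomorph R).symm y, by simpa using hy, rfl⟩, ?_⟩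
    apply R.injective
    rw [map_smul]
    refine Eq.trans ?_ h
    congr 1
    exact congrArg Subtype.val ((sphereHomeomorph R).apply_symm_apply y)

theorem integral_sphereHaar_comp (R : 𝔼 ≃ₗᵢ[ℝ] 𝔼) (f : 𝔼 → ℝ) :
    ∫ z : 𝕊, f (R z) ∂sphereHaar n = ∫ z : 𝕊, f z ∂sphereHaar n :=
  (measurePreserving_sphereHomeomorph R).integral_comp
    (sphereHomeomorph R).measurableEmbedding (fun z => f z)

theorem isProbabilityMeasure_sphereHaar (hn : n ≠ 0) : IsProbabilityMeasure (sphereHaar n) := by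
  have : Nonempty (Fin n) := ⟨⟨0, Nat.pos_of_ne_zero hn⟩⟩
  constructor
  simp only [sphereHaar, Measure.smul_apply, smul_eq_mul]
  refine ENNReal.inv_mul_cancel ?_ (measure_ne_top _ _)
  rw [Ne, Measure.measure_univ_eq_zero]
  exact Measure.toSphere_ne_zero _

instance isFiniteMeasure_sphereHaar : IsFiniteMeasure (sphereHaar n) := by
  rcases eq_or_ne n 0 with rfl | hn
  · constructor
    have : (volume : Measure (EuclideanSpace ℝ (Fin 0))).toSphere = 0 := by
      rw [Measure.toSphere_eq_zero_iff]; infer_instance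
    simp [sphereHaar, this]
  · have := isProbabilityMeasure_sphereHaar hn
    infer_instance

theorem inner_mem_Icc {x : 𝔼} (hx : ‖x‖ = 1) (z : 𝕊) : ⟪x, (z : 𝔼)⟫ ∈ Icc (-1) 1 := by
  have := abs_real_inner_le_norm x (z : 𝔼)
  rw [hx, norm_eq_of_mem_sphere z, one_mul] at this
  exact abs_le.1 this

theorem integrable_of_continuous {f : 𝕊 → ℝ} (hf : Continuous f) :
    Integrable f (sphereHaar n) :=
  hf.integrable_of_hasCompactSupport (HasCompactSupport.of_compactSpace f)

theorem continuous_comp_inner {x : 𝔼} (hx : ‖x‖ = 1) {h : ℝ → ℝ}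
    (hh : ContinuousOn h (Icc (-1) 1)) :
    Continuous fun z : 𝕊 => h ⟪x, (z : 𝔼)⟫ :=
  hh.comp_continuous (by fun_prop) (inner_mem_Icc hx)

/-- Infinitesimal rotation invariance in the plane spanned by `x` and `y`. -/
theorem integral_deriv_mul_inner_sq {x y : 𝔼} (hx : ‖x‖ = 1) (hy : ‖y‖ = 1)
    (hxy : ⟪x, y⟫ = 0) {h h' : ℝ → ℝ} (hd : ∀ u ∈ Icc (-1 : ℝ) 1, HasDerivAt h (h' u) u)
    (hc : ContinuousOn h' (Icc (-1) 1)) :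
    ∫ z : 𝕊, h' ⟪x, (z : 𝔼)⟫ * ⟪y, (z : 𝔼)⟫ ^ 2 ∂sphereHaar n =
      ∫ z : 𝕊, ⟪x, (z : 𝔼)⟫ * h ⟪x, (z : 𝔼)⟫ ∂sphereHaar n := by
  have hyx : ⟪y, x⟫ = 0 := by rw [real_inner_comm]; exact hxy
  have hxx : ⟪x, x⟫ = 1 := by rw [real_inner_self_eq_norm_sq, hx]; norm_num
  have hyy : ⟪y, y⟫ = 1 := by rw [real_inner_self_eq_norm_sq, hy]; norm_num
  have hcont : ContinuousOn h (Icc (-1) 1) := fun u hu => (hd u hu).continuousAt.continuousWithinAt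
  let w : ℝ → 𝔼 := fun t => Real.cos (t / 2) • x + Real.sin (t / 2) • y
  let R : ℝ → 𝔼 ≃ₗᵢ[ℝ] 𝔼 :=
    fun t => (Submodule.span ℝ {w t}).reflection
  have hw : ∀ t, ‖w t‖ ^ 2 = 1 := fun t => by
    rw [← real_inner_self_eq_norm_sq]
    simp only [w, inner_add_left, inner_add_right, real_inner_smul_left, real_inner_smul_right,
      hxx, hyy, hxy, hyx]
    linear_combination Real.sin_sq_add_cos_sq (t / 2)
  have hR : ∀ t z, R t z = (2 * ⟪w t, z⟫) • w t - z := fun t z => by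
    simp only [R, Submodule.reflection_singleton_apply]
    rw [RCLike.ofReal_real_eq_id, id, hw, div_one, ← Nat.cast_smul_eq_nsmul ℝ, smul_smul,
      Nat.cast_ofNat]
  have hcos : ∀ t, Real.cos t = 2 * Real.cos (t / 2) ^ 2 - 1 := fun t => by
    rw [← Real.cos_two_mul]; ring_nf
  have hsin : ∀ t, Real.sin t = 2 * Real.sin (t / 2) * Real.cos (t / 2) := fun t => by
    rw [← Real.sin_two_mul]; ring_nf
  have hRx : ∀ t z, ⟪x, R t z⟫ = Real.cos t * ⟪x, z⟫ + Real.sin t * ⟪y, z⟫ := fun t z => by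
    rw [hR, hcos, hsin]
    simp only [w, inner_add_left, inner_add_right, inner_sub_right, real_inner_smul_left,
      real_inner_smul_right, hxx, hxy]
    ring
  have hRy : ∀ t z, ⟪y, R t z⟫ = Real.sin t * ⟪x, z⟫ - Real.cos t * ⟪y, z⟫ := fun t z => by
    rw [hR, hcos, hsin]
    simp only [w, inner_add_left, inner_add_right, inner_sub_right, real_inner_smul_left,
      real_inner_smul_right, hyy, hyx]
    linear_combination (2 * ⟪y, z⟫) * Real.sin_sq_add_cos_sq (t / 2)
  have hmem : ∀ t (z : 𝕊), Real.cos t * ⟪x, (z : 𝔼)⟫ + Real.sin t * ⟪y, (z : 𝔼)⟫ ∈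
      Icc (-1 : ℝ) 1 := fun t z => by
    rw [← hRx]
    exact inner_mem_Icc hx (sphereHomeomorph (R t) z)
  obtain ⟨C, hC⟩ := isCompact_Icc.exists_bound_of_continuousOn hcont
  obtain ⟨C', hC'⟩ := isCompact_Icc.exists_bound_of_continuousOn hc
  let F : ℝ → 𝕊 → ℝ := fun t z =>
    h (Real.cos t * ⟪x, (z : 𝔼)⟫ + Real.sin t * ⟪y, (z : 𝔼)⟫) *
      (Real.sin t * ⟪x, (z : 𝔼)⟫ - Real.cos t * ⟪y, (z : 𝔼)⟫)
  let F' : ℝ → 𝕊 → ℝ := fun t z =>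
    h' (Real.cos t * ⟪x, (z : 𝔼)⟫ + Real.sin t * ⟪y, (z : 𝔼)⟫) *
      (-Real.sin t * ⟪x, (z : 𝔼)⟫ + Real.cos t * ⟪y, (z : 𝔼)⟫) *
      (Real.sin t * ⟪x, (z : 𝔼)⟫ - Real.cos t * ⟪y, (z : 𝔼)⟫) +
    h (Real.cos t * ⟪x, (z : 𝔼)⟫ + Real.sin t * ⟪y, (z : 𝔼)⟫) *
      (Real.cos t * ⟪x, (z : 𝔼)⟫ + Real.sin t * ⟪y, (z : 𝔼)⟫)
  have hFcont : ∀ t, Continuous (F t) := fun t =>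
    (hcont.comp_continuous (by fun_prop) (hmem t)).mul (by fun_prop)
  have hF'cont : ∀ t, Continuous (F' t) := fun t =>
    (((hc.comp_continuous (by fun_prop) (hmem t)).mul (by fun_prop)).mul (by fun_prop)).add
      ((hcont.comp_continuous (by fun_prop) (hmem t)).mul (by fun_prop))
  have hbd : ∀ t z, ‖F' t z‖ ≤ C' + C := fun t z => by
    have h1 := hC _ (hmem t z)
    have h2 := hC' _ (hmem t z)
    have h3 := abs_le.2 (hmem t z)
    have h4 : |Real.sin t * ⟪x, (z : 𝔼)⟫ - Real.cos t * ⟪y, (z : 𝔼)⟫| ≤ 1 := by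
      rw [← hRy]; exact abs_le.2 (inner_mem_Icc hy (sphereHomeomorph (R t) z))
    have h5 : |-Real.sin t * ⟪x, (z : 𝔼)⟫ + Real.cos t * ⟪y, (z : 𝔼)⟫| ≤ 1 := by
      rw [← abs_neg]; convert h4 using 2; ring
    have hC0 := (norm_nonneg _).trans h1
    have hC0' := (norm_nonneg _).trans h2
    refine (norm_add_le _ _).trans ?_
    rw [norm_mul, norm_mul, norm_mul]
    refine add_le_add ?_ ?_
    · calc _ ≤ C' * 1 * 1 := by gcongr <;> assumption
        _ = C' := by ring
    · calc _ ≤ C * 1 := by gcongr; assumption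
        _ = C := by ring
  have hder := (hasDerivAt_integral_of_dominated_loc_of_deriv_le (μ := sphereHaar n) (F := F)
    (F' := F') (x₀ := 0) (s := univ) (bound := fun _ => C' + C) univ_mem
    (Eventually.of_forall fun t => (hFcont t).aestronglyMeasurable)
    (integrable_of_continuous (hFcont 0)) (hF'cont 0).aestronglyMeasurable
    (Eventually.of_forall fun z t _ => hbd t z) (integrable_const _)
    (Eventually.of_forall fun z t _ => by
      have e1 : HasDerivAt (fun t => Real.cos t * ⟪x, (z : 𝔼)⟫ + Real.sin t * ⟪y, (z : 𝔼)⟫)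
          (-Real.sin t * ⟪x, (z : 𝔼)⟫ + Real.cos t * ⟪y, (z : 𝔼)⟫) t :=
        ((Real.hasDerivAt_cos t).mul_const _).add ((Real.hasDerivAt_sin t).mul_const _)
      have e2 : HasDerivAt (fun t => Real.sin t * ⟪x, (z : 𝔼)⟫ - Real.cos t * ⟪y, (z : 𝔼)⟫)
          (Real.cos t * ⟪x, (z : 𝔼)⟫ - -Real.sin t * ⟪y, (z : 𝔼)⟫) t :=
        ((Real.hasDerivAt_sin t).mul_const _).sub ((Real.hasDerivAt_cos t).mul_const _)
      refine (((hd _ (hmem t z)).comp t e1).mul e2).congr_deriv ?_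
      simp only [F', Function.comp]
      ring)).2
  have hconst : (fun t => ∫ z, F t z ∂sphereHaar n) = fun _ => ∫ z, F 0 z ∂sphereHaar n := by
    have key : ∀ t, ∫ z, F t z ∂sphereHaar n =
        ∫ z : 𝕊, h ⟪x, (z : 𝔼)⟫ * ⟪y, (z : 𝔼)⟫ ∂sphereHaar n := fun t => by
      rw [← integral_sphereHaar_comp (R t) fun z => h ⟪x, z⟫ * ⟪y, z⟫]
      simp only [hRx, hRy, F]
    funext t
    rw [key, key]
  rw [hconst] at hder
  have h0 := hder.unique (hasDerivAt_const _ _)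
  have hxc := continuous_comp_inner hx hcont
  have hxc' := continuous_comp_inner hx hc
  have i1 : Integrable (fun z : 𝕊 => h' ⟪x, (z : 𝔼)⟫ * ⟪y, (z : 𝔼)⟫ ^ 2) (sphereHaar n) :=
    integrable_of_continuous (hxc'.mul (by fun_prop))
  have i2 : Integrable (fun z : 𝕊 => ⟪x, (z : 𝔼)⟫ * h ⟪x, (z : 𝔼)⟫) (sphereHaar n) :=
    integrable_of_continuous (Continuous.mul (by fun_prop) hxc)
  rw [← sub_eq_zero, ← integral_sub i1 i2, ← neg_eq_zero, ← integral_neg, ← h0]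
  refine integral_congr_ae (Eventually.of_forall fun z => ?_)
  simp only [F', Real.sin_zero, Real.cos_zero]
  ring_nf

/-- The Gegenbauer-type integration by parts formula for zonal functions. -/
theorem integral_inner_mul {x : 𝔼} (hx : ‖x‖ = 1)
    {h h' : ℝ → ℝ} (hd : ∀ u ∈ Icc (-1 : ℝ) 1, HasDerivAt h (h' u) u)
    (hc : ContinuousOn h' (Icc (-1) 1)) :
    ((n : ℝ) - 1) * ∫ z : 𝕊, ⟪x, (z : 𝔼)⟫ * h ⟪x, (z : 𝔼)⟫ ∂sphereHaar n =
      ∫ z : 𝕊, (1 - ⟪x, (z : 𝔼)⟫ ^ 2) * h' ⟪x, (z : 𝔼)⟫ ∂sphereHaar n := by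
  have hn : 0 < n := by
    rcases Nat.eq_zero_or_pos n with rfl | h
    · simp [Subsingleton.elim x 0] at hx
    · exact h
  let i₀ : Fin n := ⟨0, hn⟩
  obtain ⟨b, hb⟩ := Orthonormal.exists_orthonormalBasis_extension_of_card_eq (𝕜 := ℝ)
    (E := 𝔼) (ι := Fin n) (by simp) (v := fun _ => x) (s := {i₀})
    (by
      rw [orthonormal_iff_ite]
      rintro ⟨i, rfl⟩ ⟨j, rfl⟩
      simp [hx])
  have hb₀ : b i₀ = x := hb i₀ rfl
  have hsum : ∀ z : 𝕊,
      ∑ i ∈ Finset.univ.erase i₀, ⟪b i, (z : 𝔼)⟫ ^ 2 = 1 - ⟪x, (z : 𝔼)⟫ ^ 2 := fun z => by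
    have h1 := b.sum_sq_norm_inner_right (z : 𝔼)
    rw [norm_eq_of_mem_sphere z, ← Finset.add_sum_erase _ _ (Finset.mem_univ i₀), hb₀] at h1
    simp only [Real.norm_eq_abs, sq_abs] at h1
    linarith
  have hxc' := continuous_comp_inner hx hc
  have hI : ∀ i ∈ Finset.univ.erase i₀, Integrable
      (fun z : 𝕊 => h' ⟪x, (z : 𝔼)⟫ * ⟪b i, (z : 𝔼)⟫ ^ 2) (sphereHaar n) :=
    fun i _ => integrable_of_continuous (hxc'.mul (by fun_prop))
  calc _ = ∑ i ∈ Finset.univ.erase i₀, ∫ z : 𝕊, ⟪x, (z : 𝔼)⟫ * h ⟪x, (z : 𝔼)⟫ ∂sphereHaar n := by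
        rw [Finset.sum_const, Finset.card_erase_of_mem (Finset.mem_univ _), Finset.card_fin,
          nsmul_eq_mul, Nat.cast_sub hn, Nat.cast_one]
    _ = ∑ i ∈ Finset.univ.erase i₀,
        ∫ z : 𝕊, h' ⟪x, (z : 𝔼)⟫ * ⟪b i, (z : 𝔼)⟫ ^ 2 ∂sphereHaar n := by
        refine Finset.sum_congr rfl fun i hi => (integral_deriv_mul_inner_sq hx (b.norm_eq_one i)
          ?_ hd hc).symm
        rw [← hb₀]
        exact b.orthonormal.2 (Finset.ne_of_mem_erase hi).symm
    _ = _ := by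
        rw [← integral_finsetSum _ hI]
        refine integral_congr_ae (Eventually.of_forall fun z => ?_)
        simp only
        rw [← Finset.mul_sum, hsum, mul_comm]

theorem integral_inner_sq_compl_rpow_le (hn : 3 ≤ n) {x : 𝔼} (hx : ‖x‖ = 1) {b : ℝ} (hb₀ : 0 ≤ b)
    (hb₁ : b < 1) {ε : ℝ} (hε : 0 < ε) (hε₁ : ε ≤ 1) :
    ∫ z : 𝕊, (1 - ⟪x, (z : 𝔼)⟫ ^ 2 + ε) ^ (-b) ∂sphereHaar n ≤ 1 / (1 - b) + 2 := by
  have := isProbabilityMeasure_sphereHaar (n := n) (by lia)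
  have hn' : (3 : ℝ) ≤ n := by exact_mod_cast hn
  have hu : ∀ u ∈ Icc (-1 : ℝ) 1, 0 ≤ 1 - u ^ 2 := fun u hu => by nlinarith [hu.1, hu.2]
  have hw : ∀ u ∈ Icc (-1 : ℝ) 1, 0 < 1 - u ^ 2 + ε := fun u h => by linarith [hu u h]
  have hbd : ∀ u ∈ Icc (-1 : ℝ) 1, (1 - u ^ 2) * (1 - u ^ 2 + ε) ^ (-b) ≤ 2 := fun u h => by
    have hp := hw u h
    calc (1 - u ^ 2) * (1 - u ^ 2 + ε) ^ (-b)
        ≤ (1 - u ^ 2 + ε) * (1 - u ^ 2 + ε) ^ (-b) := by gcongr; linarith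
      _ = (1 - u ^ 2 + ε) ^ (1 - b) := by rw [sub_eq_add_neg 1 b, Real.rpow_add hp, Real.rpow_one]
      _ ≤ 2 ^ (1 - b) := Real.rpow_le_rpow hp.le (by nlinarith [sq_nonneg u]) (by linarith)
      _ ≤ 2 ^ (1 : ℝ) := Real.rpow_le_rpow_of_exponent_le (by norm_num) (by linarith)
      _ = 2 := Real.rpow_one _
  have hcont : ∀ c : ℝ, ContinuousOn (fun u : ℝ => (1 - u ^ 2 + ε) ^ c) (Icc (-1) 1) := fun c =>
    ContinuousOn.rpow_const (by fun_prop) fun u h => Or.inl (hw u h).ne'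
  have hI : ∀ {h : ℝ → ℝ}, ContinuousOn h (Icc (-1) 1) →
      Integrable (fun z : 𝕊 => h ⟪x, (z : 𝔼)⟫) (sphereHaar n) :=
    fun h => integrable_of_continuous (continuous_comp_inner hx h)
  have i1 := hI (h := fun u => u ^ 2 * (1 - u ^ 2 + ε) ^ (-b))
    ((continuousOn_pow 2).mul (hcont (-b)))
  have i2 := hI (hcont (-b))
  have i3 := hI (h := fun u => (1 - u ^ 2) * ((1 - u ^ 2 + ε) ^ (-b) +
    u * (-(2 * u) * (-b) * (1 - u ^ 2 + ε) ^ (-b - 1))))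
    (ContinuousOn.mul (by fun_prop) ((hcont (-b)).add (continuousOn_id.mul
      (ContinuousOn.mul (by fun_prop) (hcont (-b - 1))))))
  have key := integral_inner_mul hx (h := fun u => u * (1 - u ^ 2 + ε) ^ (-b))
    (h' := fun u => (1 - u ^ 2 + ε) ^ (-b) +
      u * (-(2 * u) * (-b) * (1 - u ^ 2 + ε) ^ (-b - 1)))
    (fun u h => by
      have e1 : HasDerivAt (fun u : ℝ => 1 - u ^ 2 + ε) (-(2 * u)) u := by
        simpa using (((hasDerivAt_id u).pow 2).const_sub 1).add_const ε
      refine ((hasDerivAt_id u).mul (e1.rpow_const (p := -b) (Or.inl (hw u h).ne'))).congr_deriv ?_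
      simp)
    ((hcont (-b)).add (continuousOn_id.mul
      (ContinuousOn.mul (by fun_prop) (hcont (-b - 1)))))
  have hA : ∫ z : 𝕊, ⟪x, (z : 𝔼)⟫ * (⟪x, (z : 𝔼)⟫ * (1 - ⟪x, (z : 𝔼)⟫ ^ 2 + ε) ^ (-b)) ∂sphereHaar n
      = ∫ z : 𝕊, ⟪x, (z : 𝔼)⟫ ^ 2 * (1 - ⟪x, (z : 𝔼)⟫ ^ 2 + ε) ^ (-b) ∂sphereHaar n :=
    integral_congr_ae (Eventually.of_forall fun z => by ring)
  rw [hA] at key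
  have hA₀ : 0 ≤ ∫ z : 𝕊, ⟪x, (z : 𝔼)⟫ ^ 2 * (1 - ⟪x, (z : 𝔼)⟫ ^ 2 + ε) ^ (-b) ∂sphereHaar n :=
    integral_nonneg fun z => mul_nonneg (sq_nonneg _)
      (Real.rpow_nonneg (hw _ (inner_mem_Icc hx z)).le _)
  have hle := integral_mono i3 ((integrable_const 2).add (i1.const_mul (2 * b))) fun z => by
    have hz := inner_mem_Icc hx z
    have hp := hw _ hz
    set u := ⟪x, (z : 𝔼)⟫
    have h1 := hbd u hz
    have h2 : (1 - u ^ 2) * (1 - u ^ 2 + ε) ^ (-b - 1) ≤ (1 - u ^ 2 + ε) ^ (-b) := by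
      rw [Real.rpow_sub_one hp.ne', mul_div_assoc', div_le_iff₀ hp, mul_comm]
      gcongr
      linarith
    have h3 := mul_le_mul_of_nonneg_left h2 (by positivity : 0 ≤ 2 * b * u ^ 2)
    simp only [Pi.add_apply]
    linarith
  rw [integral_add' (integrable_const _) (i1.const_mul _), integral_const_mul] at hle
  have hle' := integral_mono i2 ((integrable_const 2).add i1) fun z => by
    have h1 := hbd _ (inner_mem_Icc hx z)
    simp only [Pi.add_apply]
    linarith
  rw [integral_add' (integrable_const _) i1] at hle'
  simp only [integral_const, probReal_univ, smul_eq_mul, one_mul] at hle hle'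
  generalize (∫ z : 𝕊, ⟪x, (z : 𝔼)⟫ ^ 2 * (1 - ⟪x, (z : 𝔼)⟫ ^ 2 + ε) ^ (-b) ∂sphereHaar n) = A at *
  have hfin : A ≤ 1 / (1 - b) := by
    rw [le_div_iff₀ (by linarith)]
    nlinarith
  linarith

theorem ae_inner_sq_lt_one (hn : 3 ≤ n) {x : 𝔼} (hx : ‖x‖ = 1) :
    ∀ᵐ z : 𝕊 ∂sphereHaar n, 0 < 1 - ⟪x, (z : 𝔼)⟫ ^ 2 := by
  have := isProbabilityMeasure_sphereHaar (n := n) (by lia)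
  rw [ae_iff]
  by_contra h
  have hm : 0 < (sphereHaar n).real {z : 𝕊 | ¬ 0 < 1 - ⟪x, (z : 𝔼)⟫ ^ 2} :=
    ENNReal.toReal_pos h (measure_ne_top _ _)
  have hm₁ : (sphereHaar n).real {z : 𝕊 | ¬ 0 < 1 - ⟪x, (z : 𝔼)⟫ ^ 2} ≤ 1 := measureReal_le_one
  set m := (sphereHaar n).real {z : 𝕊 | ¬ 0 < 1 - ⟪x, (z : 𝔼)⟫ ^ 2}
  have hδ : 0 < m / 8 := by positivity
  have hε : 0 < (m / 8) ^ 2 := by positivity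
  have hw : ∀ u ∈ Icc (-1 : ℝ) 1, 0 < 1 - u ^ 2 + (m / 8) ^ 2 := fun u h => by
    nlinarith [h.1, h.2]
  have hle := integral_inner_sq_compl_rpow_le hn hx (b := 1 / 2) (by norm_num) (by norm_num) hε
    (by nlinarith)
  have hmk := mul_meas_ge_le_integral_of_nonneg (μ := sphereHaar n)
    (f := fun z : 𝕊 => (1 - ⟪x, (z : 𝔼)⟫ ^ 2 + (m / 8) ^ 2) ^ (-(1 / 2) : ℝ))
    (ae_of_all _ fun z => Real.rpow_nonneg (hw _ (inner_mem_Icc hx z)).le _)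
    (integrable_of_continuous (continuous_comp_inner hx
      (h := fun u => (1 - u ^ 2 + (m / 8) ^ 2) ^ (-(1 / 2) : ℝ))
      (ContinuousOn.rpow_const (by fun_prop) fun u h => Or.inl (hw u h).ne'))) ((m / 8)⁻¹)
  have hsub : m ≤ (sphereHaar n).real
      {z : 𝕊 | (m / 8)⁻¹ ≤ (1 - ⟪x, (z : 𝔼)⟫ ^ 2 + (m / 8) ^ 2) ^ (-(1 / 2) : ℝ)} := by
    refine measureReal_mono fun z hz => ?_
    have hz' : ¬ 0 < 1 - ⟪x, (z : 𝔼)⟫ ^ 2 := hz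
    have hz₂ := inner_mem_Icc hx z
    have h0 : 1 - ⟪x, (z : 𝔼)⟫ ^ 2 = 0 := le_antisymm (not_lt.1 hz') (by nlinarith [hz₂.1, hz₂.2])
    rw [mem_ofPred_eq, h0, zero_add, Real.rpow_neg (sq_nonneg _), ← Real.sqrt_eq_rpow,
      Real.sqrt_sq hδ.le]
  have h1 := mul_le_mul_of_nonneg_left hsub (inv_pos.2 hδ).le
  have h2 : (m / 8)⁻¹ * m = 8 := by field_simp
  norm_num at hle
  linarith

theorem integrable_inner_sq_compl_rpow (hn : 3 ≤ n) {x : 𝔼} (hx : ‖x‖ = 1) {b : ℝ} (hb₀ : 0 ≤ b)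
    (hb₁ : b < 1) :
    Integrable (fun z : 𝕊 => (1 - ⟪x, (z : 𝔼)⟫ ^ 2) ^ (-b)) (sphereHaar n) := by
  have hpos : ∀ k : ℕ, (0 : ℝ) < 1 / ((k : ℝ) + 1) := fun k => Nat.one_div_pos_of_nat
  have hw : ∀ k : ℕ, ∀ u ∈ Icc (-1 : ℝ) 1, 0 < 1 - u ^ 2 + 1 / ((k : ℝ) + 1) := fun k u h => by
    nlinarith [h.1, h.2, hpos k]
  have hcont : ∀ k : ℕ, Continuous fun z : 𝕊 =>
      (1 - ⟪x, (z : 𝔼)⟫ ^ 2 + 1 / ((k : ℝ) + 1)) ^ (-b) := fun k =>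
    continuous_comp_inner hx (h := fun u => (1 - u ^ 2 + 1 / ((k : ℝ) + 1)) ^ (-b))
      (ContinuousOn.rpow_const (by fun_prop) fun u h => Or.inl (hw k u h).ne')
  have hlim : ∀ᵐ z : 𝕊 ∂sphereHaar n, Tendsto (fun k : ℕ =>
      (1 - ⟪x, (z : 𝔼)⟫ ^ 2 + 1 / ((k : ℝ) + 1)) ^ (-b)) atTop
      (𝓝 ((1 - ⟪x, (z : 𝔼)⟫ ^ 2) ^ (-b))) := by
    filter_upwards [ae_inner_sq_lt_one hn hx] with z hz
    have h0 := (tendsto_one_div_add_atTop_nhds_zero_nat (𝕜 := ℝ)).const_add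
      (1 - ⟪x, (z : 𝔼)⟫ ^ 2)
    rw [add_zero] at h0
    exact h0.rpow_const (Or.inl hz.ne')
  refine ⟨aestronglyMeasurable_of_tendsto_ae _ (fun k => (hcont k).aestronglyMeasurable) hlim, ?_⟩
  have hfatou : ∫⁻ z : 𝕊, ‖(1 - ⟪x, (z : 𝔼)⟫ ^ 2) ^ (-b)‖ₑ ∂sphereHaar n ≤
      liminf (fun k : ℕ => ∫⁻ z : 𝕊,
        ‖(1 - ⟪x, (z : 𝔼)⟫ ^ 2 + 1 / ((k : ℝ) + 1)) ^ (-b)‖ₑ ∂sphereHaar n) atTop := by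
    refine le_trans (lintegral_mono_ae ?_) (lintegral_liminf_le fun k => (hcont k).measurable.enorm)
    filter_upwards [hlim] with z hz
    exact hz.enorm.liminf_eq.ge
  have hbd : ∀ k : ℕ, ∫⁻ z : 𝕊,
      ‖(1 - ⟪x, (z : 𝔼)⟫ ^ 2 + 1 / ((k : ℝ) + 1)) ^ (-b)‖ₑ ∂sphereHaar n ≤
        ENNReal.ofReal (1 / (1 - b) + 2) := fun k => by
    have hnn : ∀ z : 𝕊, 0 ≤ (1 - ⟪x, (z : 𝔼)⟫ ^ 2 + 1 / ((k : ℝ) + 1)) ^ (-b) := fun z =>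
      Real.rpow_nonneg (hw k _ (inner_mem_Icc hx z)).le _
    simp_rw [fun z : 𝕊 => Real.enorm_of_nonneg (hnn z)]
    rw [← ofReal_integral_eq_lintegral_ofReal (integrable_of_continuous (hcont k))
      (ae_of_all _ hnn)]
    refine ENNReal.ofReal_le_ofReal (integral_inner_sq_compl_rpow_le hn hx hb₀ hb₁ (hpos k) ?_)
    rw [div_le_one (by positivity)]
    linarith [(Nat.cast_nonneg k : (0 : ℝ) ≤ k)]
  calc _ ≤ _ := hfatou
    _ ≤ liminf (fun _ : ℕ => ENNReal.ofReal (1 / (1 - b) + 2)) atTop :=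
        liminf_le_liminf (Eventually.of_forall hbd)
    _ < _ := by simp

theorem continuous_integral_of_compactSpace {Y : Type*} [TopologicalSpace Y] [CompactSpace Y]
    [MeasurableSpace Y] [BorelSpace Y] {ν : Measure Y} [IsFiniteMeasure ν] {f : ℝ → Y → ℝ}
    (hf : Continuous f.uncurry) : Continuous fun r => ∫ y, f r y ∂ν := by
  have h := continuous_parametric_integral_of_continuous (μ := ν) hf isCompact_univ
  simpa only [Measure.restrict_univ] using h

theorem integral_sub_eq_intervalIntegral {Y : Type*} [TopologicalSpace Y] [CompactSpace Y]
    [T2Space Y] [SecondCountableTopology Y] [MeasurableSpace Y] [BorelSpace Y] {ν : Measure Y}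
    [IsFiniteMeasure ν] {f f' : ℝ → Y → ℝ} (hd : ∀ r y, HasDerivAt (f · y) (f' r y) r)
    (hf : Continuous f.uncurry) (hf' : Continuous f'.uncurry) {a b : ℝ} (hab : a ≤ b) :
    ∫ y, f b y ∂ν - ∫ y, f a y ∂ν = ∫ r in a..b, ∫ y, f' r y ∂ν := by
  have hfi : ∀ r, Integrable (f r) ν := fun r =>
    (show Continuous (f r) from hf.comp (by fun_prop : Continuous fun y => (r, y))
      ).integrable_of_hasCompactSupport (HasCompactSupport.of_compactSpace _)
  rw [← integral_sub (hfi b) (hfi a), intervalIntegral.integral_of_le hab, integral_integral_swap]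
  · refine integral_congr_ae (Eventually.of_forall fun y => ?_)
    simp only
    rw [← intervalIntegral.integral_of_le hab]
    exact (intervalIntegral.integral_eq_sub_of_hasDerivAt (fun r _ => hd r y)
      (hf'.comp (by fun_prop : Continuous fun r => (r, y))).continuousOn.intervalIntegrable).symm
  · rw [← Measure.restrict_univ (μ := ν), Measure.prod_restrict]
    exact (hf'.continuousOn.integrableOn_compact (isCompact_Icc.prod isCompact_univ)).mono_set
      (prod_mono_left Ioc_subset_Icc_self)

/-- The regularised squared distance `|x - s z|² + ε` in terms of `u = ⟪x, z⟫`, for unit vectors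
`x` and `z`. -/
def regSqDist (ε s u : ℝ) : ℝ := 1 - 2 * s * u + s ^ 2 + ε

theorem le_regSqDist (ε s u : ℝ) : 1 - u ^ 2 + ε ≤ regSqDist ε s u := by
  unfold regSqDist
  nlinarith [sq_nonneg (s - u)]

theorem regSqDist_pos {ε : ℝ} (hε : 0 < ε) (s : ℝ) {u : ℝ} (hu : u ∈ Icc (-1 : ℝ) 1) :
    0 < regSqDist ε s u := by
  have := le_regSqDist ε s u
  nlinarith [hu.1, hu.2]

theorem regSqDist_zero_inner {x : 𝔼} (hx : ‖x‖ = 1) (s : ℝ) (z : 𝕊) :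
    regSqDist 0 s ⟪x, (z : 𝔼)⟫ = ‖x - s • (z : 𝔼)‖ ^ 2 := by
  rw [norm_sub_sq_real, real_inner_smul_right, norm_smul, mul_pow, hx, norm_eq_of_mem_sphere z,
    Real.norm_eq_abs, sq_abs, regSqDist]
  ring

theorem regSqDist_zero_inner_rpow {x : 𝔼} (hx : ‖x‖ = 1) (s c : ℝ) (z : 𝕊) :
    regSqDist 0 s ⟪x, (z : 𝔼)⟫ ^ c = ‖x - s • (z : 𝔼)‖ ^ (2 * c) := by
  rw [regSqDist_zero_inner hx, Real.rpow_mul (norm_nonneg _), Real.rpow_two]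

theorem continuous_regSqDist_rpow {x : 𝔼} (hx : ‖x‖ = 1) {ε : ℝ} (hε : 0 < ε) (a c : ℝ) :
    Continuous fun w : ℝ × 𝕊 => regSqDist ε (a * w.1) ⟪x, (w.2 : 𝔼)⟫ ^ c :=
  Continuous.rpow_const (by unfold regSqDist; fun_prop)
    fun w => Or.inl (regSqDist_pos hε _ (inner_mem_Icc hx w.2)).ne'

theorem continuous_regSqDist_rpow_right {x : 𝔼} (hx : ‖x‖ = 1) {ε : ℝ} (hε : 0 < ε) (s c : ℝ) :
    Continuous fun z : 𝕊 => regSqDist ε s ⟪x, (z : 𝔼)⟫ ^ c :=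
  Continuous.rpow_const (by unfold regSqDist; fun_prop)
    fun z => Or.inl (regSqDist_pos hε _ (inner_mem_Icc hx z)).ne'

theorem hasDerivAt_regSqDist_rpow {ε : ℝ} (hε : 0 < ε) (a c r : ℝ) {u : ℝ}
    (hu : u ∈ Icc (-1 : ℝ) 1) :
    HasDerivAt (fun r => regSqDist ε (a * r) u ^ c)
      (c * regSqDist ε (a * r) u ^ (c - 1) * (2 * a ^ 2 * r - 2 * a * u)) r := by
  have h0 : HasDerivAt (fun r => a * r) a r := by simpa using (hasDerivAt_id r).const_mul a
  have h1 : HasDerivAt (fun r => regSqDist ε (a * r) u) (2 * a ^ 2 * r - 2 * a * u) r := by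
    refine ((((h0.const_mul 2).mul_const u).const_sub 1).add (h0.pow 2)).add_const ε
      |>.congr_deriv ?_
    simp
    ring
  refine (h1.rpow_const (p := c) (Or.inl (regSqDist_pos hε _ hu).ne')).congr_deriv ?_
  ring

/-- The first derivative of the regularised mean value in radial direction. -/
theorem integral_regSqDist_rpow_sub {x : 𝔼} (hx : ‖x‖ = 1) {ε : ℝ} (hε : 0 < ε) (a c : ℝ) :
    ∫ z : 𝕊, regSqDist ε a ⟪x, (z : 𝔼)⟫ ^ c ∂sphereHaar n -
        ∫ z : 𝕊, regSqDist ε 0 ⟪x, (z : 𝔼)⟫ ^ c ∂sphereHaar n =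
      ∫ t in (0 : ℝ)..1, ∫ z : 𝕊, c * regSqDist ε (a * t) ⟪x, (z : 𝔼)⟫ ^ (c - 1) *
        (2 * a ^ 2 * t - 2 * a * ⟪x, (z : 𝔼)⟫) ∂sphereHaar n := by
  have h := integral_sub_eq_intervalIntegral (ν := sphereHaar n)
    (f := fun r (z : 𝕊) => regSqDist ε (a * r) ⟪x, (z : 𝔼)⟫ ^ c)
    (fun r z => hasDerivAt_regSqDist_rpow hε a c r (inner_mem_Icc hx z))
    (continuous_regSqDist_rpow hx hε a c)
    ((continuous_const.mul (continuous_regSqDist_rpow hx hε a (c - 1))).mul (by fun_prop))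
    zero_le_one
  simpa only [mul_one, mul_zero] using h

/-- The spherical mean of the Laplacian of `(|x - a y|² + ε) ^ c` over the sphere of radius `r`. -/
noncomputable def laplacianMean (a c : ℝ) (x : 𝔼) (ε r : ℝ) : ℝ :=
  ∫ z : 𝕊, a ^ 2 * ((2 * c * (2 * c + n - 2)) * regSqDist ε (a * r) ⟪x, (z : 𝔼)⟫ ^ (c - 1) +
    4 * c * (1 - c) * (ε * regSqDist ε (a * r) ⟪x, (z : 𝔼)⟫ ^ (c - 2))) ∂sphereHaar n

theorem continuous_laplacianMean {x : 𝔼} (hx : ‖x‖ = 1) {ε : ℝ} (hε : 0 < ε) (a c : ℝ) :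
    Continuous (laplacianMean a c x ε) := by
  refine continuous_integral_of_compactSpace (f := fun r (z : 𝕊) => a ^ 2 *
    ((2 * c * (2 * c + n - 2)) * regSqDist ε (a * r) ⟪x, (z : 𝔼)⟫ ^ (c - 1) +
    4 * c * (1 - c) * (ε * regSqDist ε (a * r) ⟪x, (z : 𝔼)⟫ ^ (c - 2)))) ?_
  exact continuous_const.mul
    ((continuous_const.mul (continuous_regSqDist_rpow hx hε a (c - 1))).add
      (continuous_const.mul (continuous_const.mul (continuous_regSqDist_rpow hx hε a (c - 2)))))

theorem pow_mul_integral_deriv_eq (hn : 2 ≤ n) {x : 𝔼} (hx : ‖x‖ = 1) {ε : ℝ} (hε : 0 < ε)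
    (a c : ℝ) {t : ℝ} (ht : 0 ≤ t) :
    t ^ (n - 1) * ∫ z : 𝕊, c * regSqDist ε (a * t) ⟪x, (z : 𝔼)⟫ ^ (c - 1) *
        (2 * a ^ 2 * t - 2 * a * ⟪x, (z : 𝔼)⟫) ∂sphereHaar n =
      ∫ r in (0 : ℝ)..t, r ^ (n - 1) * laplacianMean a c x ε r := by
  obtain ⟨m, hm⟩ : ∃ m, n = m + 2 := ⟨n - 2, by lia⟩
  have hm₁ : n - 1 = m + 1 := by lia
  have hnm : (n : ℝ) = m + 2 := by exact_mod_cast hm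
  rw [hm₁]
  have hq := fun c => continuous_regSqDist_rpow hx hε a c
  have h := integral_sub_eq_intervalIntegral (ν := sphereHaar n)
    (f := fun r (z : 𝕊) => r ^ (m + 1) * (c * regSqDist ε (a * r) ⟪x, (z : 𝔼)⟫ ^ (c - 1) *
      (2 * a ^ 2 * r - 2 * a * ⟪x, (z : 𝔼)⟫)))
    (f' := fun r (z : 𝕊) => (m + 1) * r ^ m * (c * regSqDist ε (a * r) ⟪x, (z : 𝔼)⟫ ^ (c - 1) *
      (2 * a ^ 2 * r - 2 * a * ⟪x, (z : 𝔼)⟫)) + r ^ (m + 1) *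
      (c * ((c - 1) * regSqDist ε (a * r) ⟪x, (z : 𝔼)⟫ ^ (c - 2) *
        (2 * a ^ 2 * r - 2 * a * ⟪x, (z : 𝔼)⟫)) * (2 * a ^ 2 * r - 2 * a * ⟪x, (z : 𝔼)⟫) +
        c * regSqDist ε (a * r) ⟪x, (z : 𝔼)⟫ ^ (c - 1) * (2 * a ^ 2)))
    (fun r z => by
      have h1 : HasDerivAt (fun r => 2 * a ^ 2 * r - 2 * a * ⟪x, (z : 𝔼)⟫) (2 * a ^ 2) r := by
        simpa using ((hasDerivAt_id r).const_mul (2 * a ^ 2)).sub_const (2 * a * ⟪x, (z : 𝔼)⟫)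
      have h2 := (hasDerivAt_regSqDist_rpow hε a (c - 1) r (inner_mem_Icc hx z)).const_mul c
      rw [show c - 1 - 1 = c - 2 by ring] at h2
      refine ((hasDerivAt_pow (m + 1) r).mul (h2.mul h1)).congr_deriv ?_
      simp)
    ((continuous_fst.pow _).mul ((continuous_const.mul (hq (c - 1))).mul (by fun_prop)))
    (((continuous_const.mul (continuous_fst.pow _)).mul
      ((continuous_const.mul (hq (c - 1))).mul (by fun_prop))).add
      ((continuous_fst.pow _).mul (((continuous_const.mul ((continuous_const.mul (hq (c - 2))).mul
        (by fun_prop))).mul (by fun_prop)).add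
          ((continuous_const.mul (hq (c - 1))).mul continuous_const))))
    ht
  rw [integral_const_mul, integral_const_mul, zero_pow (by lia), zero_mul, sub_zero] at h
  rw [h]
  refine intervalIntegral.integral_congr fun r _ => ?_
  have hqr := fun c => continuous_regSqDist_rpow_right hx hε (a * r) c
  have hcont : ∀ c : ℝ, ContinuousOn (fun u : ℝ => regSqDist ε (a * r) u ^ c) (Icc (-1) 1) :=
    fun c => ContinuousOn.rpow_const (by unfold regSqDist; fun_prop)
      fun u h => Or.inl (regSqDist_pos hε _ h).ne'
  have key := integral_inner_mul hx (h := fun u => regSqDist ε (a * r) u ^ (c - 1))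
    (h' := fun u => -(2 * (a * r)) * (c - 1) * regSqDist ε (a * r) u ^ (c - 2))
    (fun u hu => by
      have h1 : HasDerivAt (fun u => regSqDist ε (a * r) u) (-(2 * (a * r))) u :=
        (((((hasDerivAt_id u).const_mul (2 * (a * r))).const_sub 1).add_const
          ((a * r) ^ 2)).add_const ε).congr_deriv (by simp)
      refine (h1.rpow_const (p := c - 1) (Or.inl (regSqDist_pos hε _ hu).ne')).congr_deriv ?_
      rw [show c - 1 - 1 = c - 2 by ring])
    (continuousOn_const.mul (hcont (c - 2)))
  have j1 : Integrable (fun z : 𝕊 => ⟪x, (z : 𝔼)⟫ * regSqDist ε (a * r) ⟪x, (z : 𝔼)⟫ ^ (c - 1))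
      (sphereHaar n) := integrable_of_continuous (Continuous.mul (by fun_prop) (hqr (c - 1)))
  have j2 : Integrable (fun z : 𝕊 => (1 - ⟪x, (z : 𝔼)⟫ ^ 2) *
      (-(2 * (a * r)) * (c - 1) * regSqDist ε (a * r) ⟪x, (z : 𝔼)⟫ ^ (c - 2))) (sphereHaar n) :=
    integrable_of_continuous (Continuous.mul (by fun_prop) (continuous_const.mul (hqr (c - 2))))
  have j3 : Integrable (fun z : 𝕊 => a ^ 2 * ((2 * c * (2 * c + n - 2)) *
      regSqDist ε (a * r) ⟪x, (z : 𝔼)⟫ ^ (c - 1) +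
      4 * c * (1 - c) * (ε * regSqDist ε (a * r) ⟪x, (z : 𝔼)⟫ ^ (c - 2)))) (sphereHaar n) :=
    integrable_of_continuous (continuous_const.mul ((continuous_const.mul (hqr (c - 1))).add
      (continuous_const.mul (continuous_const.mul (hqr (c - 2))))))
  have hzero : ∫ z : 𝕊, (2 * a * c * r ^ m) * ((1 - ⟪x, (z : 𝔼)⟫ ^ 2) *
      (-(2 * (a * r)) * (c - 1) * regSqDist ε (a * r) ⟪x, (z : 𝔼)⟫ ^ (c - 2)) -
      ((n : ℝ) - 1) * (⟪x, (z : 𝔼)⟫ * regSqDist ε (a * r) ⟪x, (z : 𝔼)⟫ ^ (c - 1))) ∂sphereHaar n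
      = 0 := by
    rw [integral_const_mul, integral_sub j2 (j1.const_mul _), integral_const_mul, key, sub_self,
      mul_zero]
  have j4 : Integrable (fun z : 𝕊 => (2 * a * c * r ^ m) * ((1 - ⟪x, (z : 𝔼)⟫ ^ 2) *
      (-(2 * (a * r)) * (c - 1) * regSqDist ε (a * r) ⟪x, (z : 𝔼)⟫ ^ (c - 2)) -
      ((n : ℝ) - 1) * (⟪x, (z : 𝔼)⟫ * regSqDist ε (a * r) ⟪x, (z : 𝔼)⟫ ^ (c - 1))))
      (sphereHaar n) := (j2.sub (j1.const_mul _)).const_mul _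
  rw [laplacianMean, ← integral_const_mul]
  refine Eq.trans ?_ (add_zero _)
  rw [← hzero, ← integral_add (j3.const_mul _) j4]
  refine integral_congr_ae (Eventually.of_forall fun z => ?_)
  have hpos := regSqDist_pos hε (a * r) (inner_mem_Icc hx z)
  have hpow : regSqDist ε (a * r) ⟪x, (z : 𝔼)⟫ ^ (c - 1) =
      regSqDist ε (a * r) ⟪x, (z : 𝔼)⟫ ^ (c - 2) *
        (1 - 2 * (a * r) * ⟪x, (z : 𝔼)⟫ + (a * r) ^ 2 + ε) := by
    rw [← regSqDist, ← Real.rpow_add_one hpos.ne']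
    ring_nf
  simp only [hpow, hnm]
  ring

theorem regSqDist_rpow_le {ε : ℝ} (hε : 0 ≤ ε) (s : ℝ) {u c : ℝ} (hu : 0 < 1 - u ^ 2) (hc : c ≤ 1) :
    regSqDist ε s u ^ (c - 1) ≤ (1 - u ^ 2) ^ (-(1 - c)) := by
  rw [neg_sub]
  exact Real.rpow_le_rpow_of_nonpos hu (by linarith [le_regSqDist ε s u]) (by linarith)

theorem integrable_norm_sub_rpow (hn : 3 ≤ n) {x : 𝔼} (hx : ‖x‖ = 1) {c : ℝ} (hc₀ : 0 < c)
    (hc₁ : c ≤ 1) (s : ℝ) :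
    Integrable (fun z : 𝕊 => ‖x - s • (z : 𝔼)‖ ^ (2 * (c - 1))) (sphereHaar n) := by
  refine (integrable_inner_sq_compl_rpow hn hx (b := 1 - c) (by linarith) (by linarith)).mono'
    (Measurable.aestronglyMeasurable (by fun_prop)) ?_
  filter_upwards [ae_inner_sq_lt_one hn hx] with z hz
  rw [Real.norm_of_nonneg (by positivity), ← regSqDist_zero_inner_rpow hx]
  exact regSqDist_rpow_le le_rfl s hz hc₁

theorem norm_laplacian_integrand_le {ε : ℝ} (hε : 0 ≤ ε) (a s : ℝ) {u c : ℝ} (hu : 0 < 1 - u ^ 2)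
    (hc₀ : 0 < c) (hc₁ : c ≤ 1) (hn : 2 ≤ n) :
    ‖a ^ 2 * ((2 * c * (2 * c + n - 2)) * regSqDist ε s u ^ (c - 1) +
      4 * c * (1 - c) * (ε * regSqDist ε s u ^ (c - 2)))‖ ≤
      a ^ 2 * (2 * c * (2 * c + n - 2) + 4 * c * (1 - c)) * (1 - u ^ 2) ^ (-(1 - c)) := by
  have hn' : (2 : ℝ) ≤ n := by exact_mod_cast hn
  have h1 := regSqDist_rpow_le hε s hu hc₁
  have hq : 0 < regSqDist ε s u := by linarith [le_regSqDist ε s u]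
  have h2 : ε * regSqDist ε s u ^ (c - 2) ≤ (1 - u ^ 2) ^ (-(1 - c)) := by
    refine le_trans ?_ h1
    rw [show c - 2 = c - 1 - 1 by ring, Real.rpow_sub_one hq.ne', mul_div_assoc',
      div_le_iff₀ hq, mul_comm]
    gcongr
    linarith [le_regSqDist ε s u]
  have h3 : 0 ≤ 2 * c * (2 * c + n - 2) := mul_nonneg (by linarith) (by linarith)
  have h4 : 0 ≤ 4 * c * (1 - c) := mul_nonneg (by linarith) (by linarith)
  rw [Real.norm_of_nonneg (by positivity), mul_assoc (a ^ 2), add_mul]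
  gcongr

theorem norm_laplacianMean_le (hn : 3 ≤ n) {x : 𝔼} (hx : ‖x‖ = 1) {c : ℝ} (hc₀ : 0 < c)
    (hc₁ : c ≤ 1) {ε : ℝ} (hε : 0 ≤ ε) (a r : ℝ) :
    ‖laplacianMean a c x ε r‖ ≤ ∫ z : 𝕊, a ^ 2 * (2 * c * (2 * c + n - 2) + 4 * c * (1 - c)) *
      (1 - ⟪x, (z : 𝔼)⟫ ^ 2) ^ (-(1 - c)) ∂sphereHaar n := by
  refine norm_integral_le_of_norm_le ((integrable_inner_sq_compl_rpow hn hx (b := 1 - c)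
    (by linarith) (by linarith)).const_mul _) ?_
  filter_upwards [ae_inner_sq_lt_one hn hx] with z hz
  exact norm_laplacian_integrand_le hε a _ hz hc₀ hc₁ (by lia)

theorem tendsto_laplacianMean (hn : 3 ≤ n) {x : 𝔼} (hx : ‖x‖ = 1) {c : ℝ} (hc₀ : 0 < c)
    (hc₁ : c ≤ 1) (a r : ℝ) :
    Tendsto (fun ε => laplacianMean a c x ε r) (𝓝[>] 0)
      (𝓝 (a ^ 2 * (2 * c * (2 * c + n - 2)) *
        ∫ z : 𝕊, ‖x - (a * r) • (z : 𝔼)‖ ^ (2 * (c - 1)) ∂sphereHaar n)) := by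
  rw [← integral_const_mul]
  refine tendsto_integral_filter_of_dominated_convergence (fun z : 𝕊 =>
    a ^ 2 * (2 * c * (2 * c + n - 2) + 4 * c * (1 - c)) * (1 - ⟪x, (z : 𝔼)⟫ ^ 2) ^ (-(1 - c)))
    ?_ ?_ ((integrable_inner_sq_compl_rpow hn hx (by linarith) (by linarith)).const_mul _) ?_
  · filter_upwards [self_mem_nhdsWithin] with ε hε
    exact (continuous_const.mul ((continuous_const.mul
      (continuous_regSqDist_rpow_right hx hε _ _)).add (continuous_const.mul (continuous_const.mul
        (continuous_regSqDist_rpow_right hx hε _ _))))).aestronglyMeasurable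
  · filter_upwards [self_mem_nhdsWithin] with ε hε
    filter_upwards [ae_inner_sq_lt_one hn hx] with z hz
    exact norm_laplacian_integrand_le (le_of_lt hε) a _ hz hc₀ hc₁ (by lia)
  · filter_upwards [ae_inner_sq_lt_one hn hx] with z hz
    have hq : regSqDist 0 (a * r) ⟪x, (z : 𝔼)⟫ ≠ 0 := by
      linarith [le_regSqDist 0 (a * r) ⟪x, (z : 𝔼)⟫] |> ne_of_gt
    have hcont : ContinuousAt (fun ε => a ^ 2 * ((2 * c * (2 * c + n - 2)) *
        regSqDist ε (a * r) ⟪x, (z : 𝔼)⟫ ^ (c - 1) +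
        4 * c * (1 - c) * (ε * regSqDist ε (a * r) ⟪x, (z : 𝔼)⟫ ^ (c - 2)))) 0 := by
      have hb : ∀ e : ℝ, ContinuousAt (fun ε => regSqDist ε (a * r) ⟪x, (z : 𝔼)⟫ ^ e) 0 :=
        fun e => ContinuousAt.rpow_const (by unfold regSqDist; fun_prop) (Or.inl hq)
      exact continuousAt_const.mul ((continuousAt_const.mul (hb _)).add
        (continuousAt_const.mul (continuousAt_id.mul (hb _))))
    have ht := hcont.tendsto.mono_left (nhdsWithin_le_nhds (s := Ioi 0))
    rw [regSqDist_zero_inner_rpow hx, zero_mul, mul_zero, add_zero, ← mul_assoc] at ht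
    exact ht

theorem integral_deriv_eq_integral_laplacianMean (hn : 2 ≤ n) {x : 𝔼} (hx : ‖x‖ = 1) {ε : ℝ}
    (hε : 0 < ε) (a c : ℝ) {t : ℝ} (ht : 0 < t) :
    ∫ z : 𝕊, c * regSqDist ε (a * t) ⟪x, (z : 𝔼)⟫ ^ (c - 1) *
        (2 * a ^ 2 * t - 2 * a * ⟪x, (z : 𝔼)⟫) ∂sphereHaar n =
      ∫ r in (0 : ℝ)..t, (r / t) ^ (n - 1) * laplacianMean a c x ε r := by
  have h := pow_mul_integral_deriv_eq hn hx hε a c ht.le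
  simp_rw [div_pow, div_eq_inv_mul, mul_assoc]
  rw [intervalIntegral.integral_const_mul, ← h, inv_mul_cancel_left₀ (by positivity)]
  simp_rw [mul_assoc]

theorem norm_div_pow_le_one {r t : ℝ} (hr : r ∈ Ι 0 t) (ht : 0 < t) (k : ℕ) :
    ‖(r / t) ^ k‖ ≤ 1 := by
  rw [uIoc_of_le ht.le] at hr
  have h0 : 0 ≤ r / t := div_nonneg hr.1.le ht.le
  rw [Real.norm_of_nonneg (by positivity)]
  exact pow_le_one₀ h0 ((div_le_one ht).2 hr.2)

theorem integral_norm_sub_rpow (hn : 3 ≤ n) {x : 𝔼} (hx : ‖x‖ = 1) {c : ℝ} (hc₀ : 0 < c)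
    (hc₁ : c ≤ 1) (a : ℝ) :
    ∫ z : 𝕊, ‖x - a • (z : 𝔼)‖ ^ (2 * c) ∂sphereHaar n =
      1 + a ^ 2 * (2 * c * (2 * c + n - 2)) *
        ∫ t in (0 : ℝ)..1, ∫ r in (0 : ℝ)..t, (r / t) ^ (n - 1) *
          ∫ z : 𝕊, ‖x - (a * r) • (z : 𝔼)‖ ^ (2 * (c - 1)) ∂sphereHaar n := by
  have := isProbabilityMeasure_sphereHaar (n := n) (by lia)
  have hmean : ∀ s, Tendsto (fun ε => ∫ z : 𝕊, regSqDist ε s ⟪x, (z : 𝔼)⟫ ^ c ∂sphereHaar n)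
      (𝓝[>] 0) (𝓝 (∫ z : 𝕊, ‖x - s • (z : 𝔼)‖ ^ (2 * c) ∂sphereHaar n)) := fun s => by
    have h : Continuous fun ε => ∫ z : 𝕊, regSqDist ε s ⟪x, (z : 𝔼)⟫ ^ c ∂sphereHaar n :=
      continuous_integral_of_compactSpace (f := fun ε (z : 𝕊) => regSqDist ε s ⟪x, (z : 𝔼)⟫ ^ c)
        (Continuous.rpow_const (by unfold regSqDist; fun_prop) fun _ => Or.inr hc₀.le)
    have h' := (h.tendsto 0).mono_left (nhdsWithin_le_nhds (s := Ioi 0))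
    simpa only [regSqDist_zero_inner_rpow hx] using h'
  have h0 : ∫ z : 𝕊, ‖x - (0 : ℝ) • (z : 𝔼)‖ ^ (2 * c) ∂sphereHaar n = 1 := by simp [hx]
  have hlhs := (hmean a).sub (hmean 0)
  rw [h0] at hlhs
  rw [← sub_eq_iff_eq_add', ← intervalIntegral.integral_const_mul]
  refine tendsto_nhds_unique hlhs ?_
  set M := ∫ z : 𝕊, a ^ 2 * (2 * c * (2 * c + n - 2) + 4 * c * (1 - c)) *
      (1 - ⟪x, (z : 𝔼)⟫ ^ 2) ^ (-(1 - c)) ∂sphereHaar n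
  have hbound : ∀ {ε : ℝ}, 0 < ε → ∀ {t r : ℝ}, 0 < t → r ∈ Ι 0 t →
      ‖(r / t) ^ (n - 1) * laplacianMean a c x ε r‖ ≤ M := fun hε t r ht hr => by
    rw [norm_mul]
    calc _ ≤ 1 * M := mul_le_mul (norm_div_pow_le_one hr ht _)
          (norm_laplacianMean_le hn hx hc₀ hc₁ hε.le a r) (norm_nonneg _) zero_le_one
      _ = M := one_mul M
  have hinner : ∀ t ∈ Ι (0 : ℝ) 1, Tendsto
      (fun ε => ∫ r in (0 : ℝ)..t, (r / t) ^ (n - 1) * laplacianMean a c x ε r) (𝓝[>] 0)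
      (𝓝 (a ^ 2 * (2 * c * (2 * c + n - 2)) * ∫ r in (0 : ℝ)..t, (r / t) ^ (n - 1) *
        ∫ z : 𝕊, ‖x - (a * r) • (z : 𝔼)‖ ^ (2 * (c - 1)) ∂sphereHaar n)) := fun t ht => by
    rw [uIoc_of_le zero_le_one] at ht
    rw [← intervalIntegral.integral_const_mul]
    refine intervalIntegral.tendsto_integral_filter_of_dominated_convergence (fun _ => M) ?_ ?_
      intervalIntegrable_const ?_
    · filter_upwards [self_mem_nhdsWithin] with ε hε
      exact (Continuous.mul (by fun_prop)
        (continuous_laplacianMean hx hε a c)).aestronglyMeasurable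
    · filter_upwards [self_mem_nhdsWithin] with ε hε
      exact ae_of_all _ fun r hr => hbound hε ht.1 hr
    · refine ae_of_all _ fun r _ => ?_
      rw [mul_left_comm]
      exact (tendsto_laplacianMean hn hx hc₀ hc₁ a r).const_mul _
  have houter := intervalIntegral.tendsto_integral_filter_of_dominated_convergence
    (μ := volume) (l := 𝓝[>] (0 : ℝ)) (a := 0) (b := 1)
    (F := fun ε t => ∫ z : 𝕊, c * regSqDist ε (a * t) ⟪x, (z : 𝔼)⟫ ^ (c - 1) *
        (2 * a ^ 2 * t - 2 * a * ⟪x, (z : 𝔼)⟫) ∂sphereHaar n) (fun _ => M)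
    (by
      filter_upwards [self_mem_nhdsWithin] with ε hε
      exact (continuous_integral_of_compactSpace (f := fun t (z : 𝕊) =>
        c * regSqDist ε (a * t) ⟪x, (z : 𝔼)⟫ ^ (c - 1) * (2 * a ^ 2 * t - 2 * a * ⟪x, (z : 𝔼)⟫))
        ((continuous_const.mul (continuous_regSqDist_rpow hx hε a (c - 1))).mul
          (by fun_prop))).aestronglyMeasurable)
    (by
      filter_upwards [self_mem_nhdsWithin] with ε hε
      refine ae_of_all _ fun t ht => ?_
      rw [uIoc_of_le zero_le_one] at ht
      rw [integral_deriv_eq_integral_laplacianMean (by lia) hx hε a c ht.1]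
      refine (intervalIntegral.norm_integral_le_of_norm_le_const fun r hr =>
        hbound hε ht.1 hr).trans ?_
      rw [sub_zero, abs_of_pos ht.1]
      exact mul_le_of_le_one_right
        ((norm_nonneg _).trans (norm_laplacianMean_le hn hx hc₀ hc₁ (le_of_lt hε) a t)) ht.2)
    intervalIntegrable_const
    (ae_of_all _ fun t ht => (hinner t ht).congr' (by
      rw [uIoc_of_le zero_le_one] at ht
      filter_upwards [self_mem_nhdsWithin] with ε hε
      rw [integral_deriv_eq_integral_laplacianMean (by lia) hx hε a c ht.1]))
  refine houter.congr' ?_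
  filter_upwards [self_mem_nhdsWithin] with ε hε
  exact (integral_regSqDist_rpow_sub hx hε a c).symm

end SphereHaar

theorem stmt_4 (n : ℕ) (hn : 3 ≤ n) (p : ℝ) (hp : p ∈ Set.Ioc (0 : ℝ) 2)
    (x : EuclideanSpace ℝ (Fin n)) (hx : ‖x‖ = 1) (a : ℝ) :
    (∀ r : ℝ, Integrable (fun z : sphere (0 : EuclideanSpace ℝ (Fin n)) 1 =>
        ‖x - (a * r) • (z : EuclideanSpace ℝ (Fin n))‖ ^ (p - 2)) (sphereHaar n)) ∧
    (∫ z : sphere (0 : EuclideanSpace ℝ (Fin n)) 1,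
        ‖x - a • (z : EuclideanSpace ℝ (Fin n))‖ ^ p ∂(sphereHaar n)) =
      1 + a ^ 2 * p * (p + (n : ℝ) - 2) *
        ∫ t in (0 : ℝ)..1, ∫ r in (0 : ℝ)..t, (r / t) ^ (n - 1) *
          ∫ z : sphere (0 : EuclideanSpace ℝ (Fin n)) 1,
            ‖x - (a * r) • (z : EuclideanSpace ℝ (Fin n))‖ ^ (p - 2) ∂(sphereHaar n) := by
  have hc₀ : 0 < p / 2 := by linarith [hp.1]
  have hc₁ : p / 2 ≤ 1 := by linarith [hp.2]
  have h2 : 2 * (p / 2) = p := by ring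
  have h3 : 2 * (p / 2 - 1) = p - 2 := by ring
  constructor
  · intro r
    have h := integrable_norm_sub_rpow hn hx hc₀ hc₁ (a * r)
    rwa [h3] at h
  · have h := integral_norm_sub_rpow hn hx hc₀ hc₁ a
    rwa [h2, h3, ← mul_assoc] at h
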